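/- For every integer k ≥ 0 and every p ∈ (1, ∞) there exists a constant C = C(k, p) > 0 such that for every f : [0, ∞) → ℝ of class C^(max(k,2)), one has Σ_{j=0}^{k} ‖(d/dx)^j [ x·If(x)/(1 + x²) ]‖_{L^p(0,∞)} ≤ C · Σ_{i=0}^{max(k−1,1)} ‖f^(1+i)‖_{L^p(0,∞)}, where If(x) = ∫₀^x (f(y) − f(0) − y f'(0))/y² dy, and the inequality is interpreted in [0, ∞]. -/

import Mathlib

open MeasureTheory

namespace XIf

/-- continuous on `(0,∞)` and bounded near `0`. -/
def LB (w : ℝ → ℝ) : Prop :=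
  ContinuousOn w (Set.Ioi 0) ∧ ∀ R : ℝ, ∃ M : ℝ, ∀ x ∈ Set.Ioc (0 : ℝ) R, |w x| ≤ M

/-- weighted average -/
noncomputable def T (c : ℕ) (w : ℝ → ℝ) (x : ℝ) : ℝ :=
  (∫ y in (0 : ℝ)..x, y ^ c * w y) / x ^ (c + 1)

lemma LB.sub {u w : ℝ → ℝ} (hu : LB u) (hw : LB w) : LB (fun x => u x - w x) := by
  refine ⟨hu.1.sub hw.1, fun R => ?_⟩
  obtain ⟨M, hM⟩ := hu.2 R
  obtain ⟨M', hM'⟩ := hw.2 R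
  refine ⟨M + M', fun x hx => (abs_sub _ _).trans (add_le_add (hM x hx) (hM' x hx))⟩

lemma LB.intervalIntegrable {w : ℝ → ℝ} (hw : LB w) (c : ℕ) {x : ℝ} (hx : 0 < x) :
    IntervalIntegrable (fun y => y ^ c * w y) volume 0 x := by
  rw [intervalIntegrable_iff_integrableOn_Ioc_of_le hx.le]
  obtain ⟨M, hM⟩ := hw.2 x
  refine IntegrableOn.of_bound (by simp) ?_ (x ^ c * M) ?_
  · refine ContinuousOn.aestronglyMeasurable ?_ measurableSet_Ioc
    exact (continuousOn_id.pow c).mul (hw.1.mono (fun y hy => hy.1))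
  · filter_upwards [ae_restrict_mem measurableSet_Ioc] with y hy
    rw [Real.norm_eq_abs, abs_mul, abs_of_nonneg (pow_nonneg hy.1.le c)]
    exact mul_le_mul (pow_le_pow_left₀ hy.1.le hy.2 c) (hM y hy) (abs_nonneg _) (pow_nonneg hx.le c)

lemma LB.hasDerivAt_int {w : ℝ → ℝ} (hw : LB w) (c : ℕ) {x : ℝ} (hx : 0 < x) :
    HasDerivAt (fun x => ∫ y in (0 : ℝ)..x, y ^ c * w y) (x ^ c * w x) x := by
  have hc : ContinuousOn (fun y => y ^ c * w y) (Set.Ioi 0) := (continuousOn_id.pow c).mul hw.1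
  refine intervalIntegral.integral_hasDerivAt_right (hw.intervalIntegrable c hx) ?_ ?_
  · exact hc.stronglyMeasurableAtFilter isOpen_Ioi x hx
  · exact hc.continuousAt (Ioi_mem_nhds hx)

lemma LB.hasDerivAt_T {w : ℝ → ℝ} (hw : LB w) (c : ℕ) {x : ℝ} (hx : 0 < x) :
    HasDerivAt (T c w) ((w x - (c + 1) * T c w x) / x) x := by
  have h := (hw.hasDerivAt_int c hx).div (hasDerivAt_pow (c + 1) x) (pow_ne_zero _ hx.ne')
  refine h.congr_deriv ?_
  unfold T
  have : x ≠ 0 := hx.ne'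
  push_cast
  field_simp
  ring

lemma LB.T {w : ℝ → ℝ} (hw : LB w) (c : ℕ) : LB (T c w) := by
  refine ⟨fun x hx => (hw.hasDerivAt_T c hx).continuousAt.continuousWithinAt, fun R => ?_⟩
  obtain ⟨M, hM⟩ := hw.2 R
  refine ⟨M, fun x hx => ?_⟩
  have hx0 : 0 < x := hx.1
  have := intervalIntegral.norm_integral_le_of_norm_le_const (a := 0) (b := x)
    (f := fun y => y ^ c * w y) (C := x ^ c * M) (by
      intro y hy
      rw [Set.uIoc_of_le hx0.le] at hy
      rw [Real.norm_eq_abs, abs_mul, abs_of_nonneg (pow_nonneg hy.1.le c)]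
      exact mul_le_mul (pow_le_pow_left₀ hy.1.le hy.2 c) (hM y ⟨hy.1, hy.2.trans hx.2⟩)
        (abs_nonneg _) (pow_nonneg hx0.le c))
  unfold XIf.T
  rw [abs_div, abs_of_pos (pow_pos hx0 (c + 1)), div_le_iff₀ (pow_pos hx0 _)]
  refine this.trans_eq ?_
  rw [sub_zero, abs_of_pos hx0]
  ring

lemma LB.T_ibp {w w' : ℝ → ℝ} (hw : LB w) (hw' : LB w')
    (h : ∀ x > 0, HasDerivAt w (w' x) x) (c : ℕ) {x : ℝ} (hx : 0 < x) :
    XIf.T (c + 1) w' x = (w x - (c + 1) * XIf.T c w x) / x := by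
  have key : ∫ y in (0 : ℝ)..x, ((c + 1 : ℝ) * (y ^ c * w y) + y ^ (c + 1) * w' y)
      = x ^ (c + 1) * w x - 0 ^ (c + 1) * w 0 := by
    refine intervalIntegral.integral_eq_sub_of_hasDerivAt_of_le (f := fun y => y ^ (c + 1) * w y)
      hx.le ?_ ?_ ?_
    · intro y hy
      rcases hy.1.eq_or_lt with h0 | h0
      · subst h0
        obtain ⟨M, hM⟩ := hw.2 x
        have hM0 : 0 ≤ M := (abs_nonneg _).trans (hM x ⟨hx, le_rfl⟩)
        unfold ContinuousWithinAt
        simp only [ne_eq, Nat.add_eq_zero_iff, one_ne_zero, and_false, not_false_eq_true, zero_pow,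
          zero_mul]
        refine squeeze_zero_norm' (a := fun y => |y| ^ (c + 1) * M) ?_ ?_
        · filter_upwards [self_mem_nhdsWithin] with y hy
          rcases hy.1.eq_or_lt with h0 | h0
          · subst h0; simp
          · rw [Real.norm_eq_abs, abs_mul, abs_pow]
            exact mul_le_mul_of_nonneg_left (hM y ⟨h0, hy.2⟩) (by positivity)
        · have : Continuous (fun y : ℝ => |y| ^ (c + 1) * M) := by fun_prop
          have h2 := this.tendsto 0
          simp only [abs_zero, ne_eq, Nat.add_eq_zero_iff, one_ne_zero, and_false,
            not_false_eq_true, zero_pow, zero_mul] at h2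
          exact h2.mono_left nhdsWithin_le_nhds
      · exact (((continuousAt_id.pow (c + 1))).mul (h y h0).continuousAt).continuousWithinAt
    · intro y hy
      refine ((hasDerivAt_pow (c + 1) y).mul (h y hy.1)).congr_deriv ?_
      push_cast
      ring
    · exact ((hw.intervalIntegrable c hx).const_mul _).add (hw'.intervalIntegrable (c + 1) hx)
  rw [intervalIntegral.integral_add ((hw.intervalIntegrable c hx).const_mul _)
    (hw'.intervalIntegrable (c + 1) hx), intervalIntegral.integral_const_mul] at key
  have hx' : x ≠ 0 := hx.ne'
  have k2 : ∫ y in (0 : ℝ)..x, y ^ (c + 1) * w' y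
    = x ^ (c + 1) * w x - (c + 1) * ∫ y in (0 : ℝ)..x, y ^ c * w y := by
    simp at key; linarith
  unfold XIf.T
  rw [k2]
  field_simp
  ring

lemma iteratedDerivWithin_jet {F : ℕ → ℝ → ℝ} {n : ℕ}
    (h : ∀ j < n, ∀ x > 0, HasDerivAt (F j) (F (j + 1) x) x) :
    ∀ j ≤ n, ∀ x > 0, iteratedDerivWithin j (F 0) (Set.Ioi 0) x = F j x := by
  intro j
  induction j with
  | zero => intro _ x _; simp
  | succ j ih =>
    intro hj x hx
    rw [iteratedDerivWithin_succ]
    rw [derivWithin_congr (s := Set.Ioi 0) (fun y hy => ih (by omega) y hy) (ih (by omega) x hx)]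
    exact (h j (by omega) x hx).hasDerivWithinAt.derivWithin (isOpen_Ioi.uniqueDiffWithinAt hx)

lemma contDiffOn_jet {F : ℕ → ℝ → ℝ} {n : ℕ}
    (h : ∀ j < n, ∀ x > 0, HasDerivAt (F j) (F (j + 1) x) x)
    (hc : ContinuousOn (F n) (Set.Ioi 0)) : ContDiffOn ℝ n (F 0) (Set.Ioi 0) := by
  have key := iteratedDerivWithin_jet h
  have := contDiffOn_of_continuousOn_differentiableOn_deriv (𝕜 := ℝ) (n := n) (f := F 0)
    (s := Set.Ioi 0) ?_ ?_
  · exact_mod_cast this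
  · intro m hm
    have hm' : m ≤ n := by exact_mod_cast hm
    refine ContinuousOn.congr ?_ (key m hm')
    rcases hm'.eq_or_lt with rfl | h1
    · exact hc
    · exact fun x hx => (h m h1 x hx).continuousAt.continuousWithinAt
  · intro m hm
    have hm' : m < n := by exact_mod_cast hm
    refine DifferentiableOn.congr ?_ (key m hm'.le)
    exact fun x hx => (h m hm' x hx).differentiableAt.differentiableWithinAt

/-- algebra of bounded functions -/
inductive Good : (ℝ → ℝ) → Prop
  | a : Good (fun x => 1 / (1 + x ^ 2))
  | b : Good (fun x => x / (1 + x ^ 2))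
  | const (c : ℝ) : Good (fun _ => c)
  | add {u v : ℝ → ℝ} : Good u → Good v → Good (fun x => u x + v x)
  | mul {u v : ℝ → ℝ} : Good u → Good v → Good (fun x => u x * v x)

lemma Good.bdd {u : ℝ → ℝ} (h : Good u) : ∃ B : ℝ, ∀ x, |u x| ≤ B := by
  induction h with
  | a =>
    refine ⟨1, fun x => ?_⟩
    rw [abs_of_nonneg (by positivity), div_le_one (by positivity)]
    nlinarith [sq_nonneg x]
  | b =>
    refine ⟨1, fun x => ?_⟩
    rw [abs_div, abs_of_pos (show 0 < 1 + x ^ 2 by positivity), div_le_one (by positivity)]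
    nlinarith [sq_nonneg (|x| - 1), sq_abs x]
  | const c => exact ⟨|c|, fun _ => le_rfl⟩
  | add _ _ h1 h2 =>
    obtain ⟨B, hB⟩ := h1
    obtain ⟨B', hB'⟩ := h2
    exact ⟨B + B', fun x => (abs_add_le _ _).trans (add_le_add (hB x) (hB' x))⟩
  | mul _ _ h1 h2 =>
    obtain ⟨B, hB⟩ := h1
    obtain ⟨B', hB'⟩ := h2
    refine ⟨B * B', fun x => ?_⟩
    rw [abs_mul]
    exact mul_le_mul (hB x) (hB' x) (abs_nonneg _) ((abs_nonneg _).trans (hB x))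

lemma Good.der {u : ℝ → ℝ} (h : Good u) : ∃ u', Good u' ∧ ∀ x, HasDerivAt u (u' x) x := by
  induction h with
  | a =>
    refine ⟨_, (Good.const (-2)).mul (Good.a.mul Good.b), fun x => ?_⟩
    have h0 : (1 + x ^ 2) ≠ 0 := by positivity
    refine ((hasDerivAt_const x (1 : ℝ)).div ((hasDerivAt_pow 2 x).const_add 1) h0).congr_deriv ?_
    field_simp
    ring
  | b =>
    refine ⟨_, Good.a.add ((Good.const (-2)).mul (Good.b.mul Good.b)), fun x => ?_⟩
    have h0 : (1 + x ^ 2) ≠ 0 := by positivity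
    refine ((hasDerivAt_id x).div ((hasDerivAt_pow 2 x).const_add 1) h0).congr_deriv ?_
    simp only [id]
    field_simp
    norm_num
    ring
  | const c => exact ⟨_, Good.const 0, fun x => hasDerivAt_const x c⟩
  | add _ _ h1 h2 =>
    obtain ⟨u', hu, hu'⟩ := h1
    obtain ⟨v', hv, hv'⟩ := h2
    exact ⟨_, hu.add hv, fun x => (hu' x).add (hv' x)⟩
  | mul h3 h4 h1 h2 =>
    obtain ⟨u', hu, hu'⟩ := h1
    obtain ⟨v', hv, hv'⟩ := h2
    exact ⟨_, (hu.mul h4).add (h3.mul hv), fun x => (hu' x).mul (hv' x)⟩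

lemma good_jet : ∃ P : ℕ → ℝ → ℝ, (∀ j x, HasDerivAt (P j) (P (j + 1) x) x) ∧
    (∀ j, Good (P j)) ∧ P 0 = fun x => x ^ 2 / (1 + x ^ 2) := by
  have h0 : Good (fun x : ℝ => x ^ 2 / (1 + x ^ 2)) := by
    have : (fun x : ℝ => x ^ 2 / (1 + x ^ 2)) = fun x => 1 + (-1) * (1 / (1 + x ^ 2)) := by
      ext x
      have h0 : (1 + x ^ 2) ≠ 0 := by positivity
      field_simp
      ring
    rw [this]
    exact (Good.const 1).add ((Good.const (-1)).mul Good.a)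
  choose! d hd hd' using (fun (u : ℝ → ℝ) (h : Good u) => h.der)
  have hg : ∀ j, Good (d^[j] (fun x : ℝ => x ^ 2 / (1 + x ^ 2))) := by
    intro j
    induction j with
    | zero => exact h0
    | succ j ih => rw [Function.iterate_succ_apply']; exact hd _ ih
  refine ⟨fun j => d^[j] (fun x : ℝ => x ^ 2 / (1 + x ^ 2)), ?_, hg, rfl⟩
  intro j x
  simp only [Function.iterate_succ_apply']
  exact hd' _ (hg j) x

lemma phi_bounds (N : ℕ) : ∃ P : ℕ → ℝ → ℝ, ∃ B : ℝ, 0 < B ∧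
    (∀ j x, HasDerivAt (P j) (P (j + 1) x) x) ∧
    (P 0 = fun x => x ^ 2 / (1 + x ^ 2)) ∧ (∀ j ≤ N, ∀ x, |P j x| ≤ B) ∧
    (∀ x > 0, |P 0 x| ≤ B * x) ∧ (∀ x > 0, |P 0 x| ≤ B * x ^ 2) ∧
    (∀ x > 0, |P 1 x| ≤ B * x) := by
  obtain ⟨P, hP, hg, h0⟩ := good_jet
  choose b hb using fun j => (hg j).bdd
  have hb0 : ∀ j, 0 ≤ b j := fun j => (abs_nonneg _).trans (hb j 0)
  have hS : 0 ≤ ∑ j ∈ Finset.range (N + 1), b j := Finset.sum_nonneg (fun j _ => hb0 j)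
  have h1 : ∀ x, P 1 x = 2 * x / (1 + x ^ 2) ^ 2 := by
    intro x
    have hne : (1 + x ^ 2) ≠ 0 := by positivity
    refine (hP 0 x).unique ?_
    rw [h0]
    refine ((hasDerivAt_pow 2 x).div ((hasDerivAt_pow 2 x).const_add 1) hne).congr_deriv ?_
    field_simp
    ring
  refine ⟨P, ∑ j ∈ Finset.range (N + 1), b j + 2, by linarith, hP, h0, ?_, ?_, ?_, ?_⟩
  · intro j hj x
    have := Finset.single_le_sum (f := b) (s := Finset.range (N + 1)) (fun j _ => hb0 j)
      (Finset.mem_range.2 (by omega : j < N + 1))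
    linarith [hb j x]
  · intro x hx
    have : |P 0 x| ≤ 2 * x := by
      rw [h0, abs_of_nonneg (by positivity), div_le_iff₀ (by positivity)]
      nlinarith [sq_nonneg (x - 1), mul_pos hx (mul_pos hx hx)]
    nlinarith
  · intro x hx
    have : |P 0 x| ≤ 2 * x ^ 2 := by
      rw [h0, abs_of_nonneg (by positivity), div_le_iff₀ (by positivity)]
      nlinarith [sq_nonneg (x ^ 2), sq_nonneg x]
    nlinarith [sq_nonneg x]
  · intro x hx
    have : |P 1 x| ≤ 2 * x := by
      rw [h1, abs_of_nonneg (by positivity), div_le_iff₀ (by positivity)]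
      have : 1 ≤ (1 + x ^ 2) ^ 2 := one_le_pow₀ (by nlinarith)
      nlinarith
    nlinarith

open scoped ENNReal

/-- Hardy average -/
noncomputable def H (u : ℝ → ℝ≥0∞) (x : ℝ) : ℝ≥0∞ :=
  (∫⁻ y in Set.Ioo 0 x, u y) / ENNReal.ofReal x

/-- Lp norm on the half line -/
noncomputable def N (p : ℝ) (u : ℝ → ℝ≥0∞) : ℝ≥0∞ :=
  (∫⁻ x in Set.Ioi (0 : ℝ), u x ^ p) ^ (1 / p)

lemma H_measurable (u : ℝ → ℝ≥0∞) : Measurable (H u) := by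
  unfold H
  refine Measurable.div ?_ ENNReal.measurable_ofReal
  refine Monotone.measurable ?_
  intro a b hab
  exact lintegral_mono_set (Set.Ioo_subset_Ioo_right hab)

lemma H_mono {u v : ℝ → ℝ≥0∞} (h : ∀ x > 0, u x ≤ v x) (x : ℝ) : H u x ≤ H v x := by
  unfold H
  refine ENNReal.div_le_div_right ?_ _
  exact setLIntegral_mono' measurableSet_Ioo (fun y hy => h y hy.1)

lemma H_const_mul (c : ℝ≥0∞) (hc : c ≠ ∞) (u : ℝ → ℝ≥0∞) (x : ℝ) :
    H (fun y => c * u y) x = c * H u x := by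
  unfold H
  rw [lintegral_const_mul' _ _ hc, mul_div_assoc]

lemma N_mono {p : ℝ} (hp : 1 < p) {u v : ℝ → ℝ≥0∞} (h : ∀ x > 0, u x ≤ v x) :
    N p u ≤ N p v := by
  unfold N
  refine ENNReal.rpow_le_rpow ?_ (by positivity)
  exact setLIntegral_mono' measurableSet_Ioi
    (fun y hy => ENNReal.rpow_le_rpow (h y hy) (by positivity))

lemma N_const_mul {p : ℝ} (hp : 1 < p) (c : ℝ≥0∞) (hc : c ≠ ∞) (u : ℝ → ℝ≥0∞) :
    N p (fun x => c * u x) = c * N p u := by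
  unfold N
  have hp0 : 0 < p := by linarith
  simp_rw [ENNReal.mul_rpow_of_nonneg _ _ hp0.le]
  rw [lintegral_const_mul' _ _ (by simp [hc, hp0.le]), ENNReal.mul_rpow_of_nonneg _ _ (by positivity),
    ← ENNReal.rpow_mul]
  rw [mul_one_div_cancel hp0.ne', ENNReal.rpow_one]

lemma N_add_le {p : ℝ} (hp : 1 < p) {u v : ℝ → ℝ≥0∞}
    (hu : Measurable u) (hv : Measurable v) : N p (fun x => u x + v x) ≤ N p u + N p v :=
  ENNReal.lintegral_Lp_add_le hu.aemeasurable hv.aemeasurable hp.le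

lemma N_sum_le {p : ℝ} (hp : 1 < p) {u : ℕ → ℝ → ℝ≥0∞}
    (hu : ∀ i, Measurable (u i)) (n : ℕ) :
    N p (fun x => ∑ i ∈ Finset.range n, u i x) ≤ ∑ i ∈ Finset.range n, N p (u i) := by
  induction n with
  | zero =>
    have hp0 : 0 < p := by linarith
    simp [N, hp0]
  | succ n ih =>
    simp_rw [Finset.sum_range_succ]
    refine (N_add_le hp (Finset.measurable_sum _ (fun i _ => hu i)) (hu n)).trans ?_
    gcongr

lemma lint_Ioo {r x : ℝ} (hr : 0 < r) (hx : 0 < x) :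
    ∫⁻ y in Set.Ioo 0 x, ENNReal.ofReal (y ^ (r - 1)) = ENNReal.ofReal (x ^ r / r) := by
  have hi : IntervalIntegrable (fun y : ℝ => y ^ (r - 1)) volume 0 x :=
    intervalIntegral.intervalIntegrable_rpow' (by linarith)
  rw [intervalIntegrable_iff_integrableOn_Ioo_of_le hx.le] at hi
  rw [← ofReal_integral_eq_lintegral_ofReal hi]
  · rw [← integral_Ioc_eq_integral_Ioo, ← intervalIntegral.integral_of_le hx.le,
      integral_rpow (Or.inl (by linarith))]
    congr 1
    rw [sub_add_cancel, Real.zero_rpow hr.ne', sub_zero]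
  · filter_upwards [ae_restrict_mem measurableSet_Ioo] with y hy
    exact Real.rpow_nonneg hy.1.le _

lemma lint_Ioi {r y : ℝ} (hr : 0 < r) (hy : 0 < y) :
    ∫⁻ x in Set.Ioi y, ENNReal.ofReal (x ^ (-r - 1)) = ENNReal.ofReal (y ^ (-r) / r) := by
  have hi := integrableOn_Ioi_rpow_of_lt (a := -r - 1) (by linarith) hy
  rw [← ofReal_integral_eq_lintegral_ofReal hi]
  · rw [integral_Ioi_rpow_of_lt (by linarith) hy]
    congr 1
    rw [sub_add_cancel, neg_div_neg_eq]
  · filter_upwards [ae_restrict_mem measurableSet_Ioi] with x hx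
    exact Real.rpow_nonneg (hy.trans hx).le _

lemma hardy_pointwise {p r : ℝ} (hp : 1 < p) (hr : r = 1 - 1 / p) {u : ℝ → ℝ≥0∞}
    (hu : Measurable u) {x : ℝ} (hx : 0 < x) :
    H u x ^ p ≤ ENNReal.ofReal ((1 / r) ^ (r * p)) * (ENNReal.ofReal (x ^ (-r - 1)) *
      ∫⁻ y in Set.Ioo 0 x, ENNReal.ofReal (y ^ r) * u y ^ p) := by
  have hp0 : 0 < p := by linarith
  have hr0 : 0 < r := by rw [hr, sub_pos, div_lt_one hp0]; exact hp
  have hpq : p.HolderConjugate (1 / r) := by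
    rw [Real.holderConjugate_iff]
    refine ⟨hp, ?_⟩
    rw [hr]; simp
  have hold := ENNReal.lintegral_mul_le_Lp_mul_Lq (volume.restrict (Set.Ioo 0 x)) hpq
    (f := fun y => ENNReal.ofReal (y ^ (r / p)) * u y)
    (g := fun y => ENNReal.ofReal (y ^ (-(r / p)))) (by fun_prop) (by fun_prop)
  have e1 : ∫⁻ y in Set.Ioo 0 x, ((fun y => ENNReal.ofReal (y ^ (r / p)) * u y) *
      (fun y => ENNReal.ofReal (y ^ (-(r / p))))) y = ∫⁻ y in Set.Ioo 0 x, u y := by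
    refine setLIntegral_congr_fun measurableSet_Ioo (fun y hy => ?_)
    simp only [Pi.mul_apply]
    rw [mul_right_comm, ← ENNReal.ofReal_mul (Real.rpow_nonneg hy.1.le _), ← Real.rpow_add hy.1]
    simp
  have e2 : ∫⁻ y in Set.Ioo 0 x, (ENNReal.ofReal (y ^ (r / p)) * u y) ^ p
      = ∫⁻ y in Set.Ioo 0 x, ENNReal.ofReal (y ^ r) * u y ^ p := by
    refine setLIntegral_congr_fun measurableSet_Ioo (fun y hy => ?_)
    rw [ENNReal.mul_rpow_of_nonneg _ _ hp0.le,
      ENNReal.ofReal_rpow_of_nonneg (Real.rpow_nonneg hy.1.le _) hp0.le, ← Real.rpow_mul hy.1.le,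
      div_mul_cancel₀ _ hp0.ne']
  have e3 : ∫⁻ y in Set.Ioo 0 x, (ENNReal.ofReal (y ^ (-(r / p)))) ^ (1 / r)
      = ENNReal.ofReal (x ^ r / r) := by
    rw [← lint_Ioo hr0 hx]
    refine setLIntegral_congr_fun measurableSet_Ioo (fun y hy => ?_)
    rw [ENNReal.ofReal_rpow_of_nonneg (Real.rpow_nonneg hy.1.le _) (by positivity),
      ← Real.rpow_mul hy.1.le]
    congr 2
    rw [show r - 1 = - (1 / p) by rw [hr]; ring]
    field_simp
  rw [e1, e2, e3, one_div_one_div] at hold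
  unfold H
  calc ((∫⁻ y in Set.Ioo 0 x, u y) / ENNReal.ofReal x) ^ p
      ≤ (((∫⁻ y in Set.Ioo 0 x, ENNReal.ofReal (y ^ r) * u y ^ p) ^ (1 / p) *
        ENNReal.ofReal (x ^ r / r) ^ r) / ENNReal.ofReal x) ^ p := by gcongr
    _ = _ := by
      rw [div_eq_mul_inv, ENNReal.mul_rpow_of_nonneg _ _ hp0.le,
        ENNReal.mul_rpow_of_nonneg _ _ hp0.le, ← ENNReal.rpow_mul, one_div_mul_cancel hp0.ne',
        ENNReal.rpow_one, ← ENNReal.ofReal_inv_of_pos hx,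
        ENNReal.ofReal_rpow_of_nonneg (by positivity) hr0.le,
        ENNReal.ofReal_rpow_of_nonneg (by positivity) hp0.le,
        ENNReal.ofReal_rpow_of_nonneg (by positivity) hp0.le, mul_assoc,
        ← ENNReal.ofReal_mul (by positivity), ← mul_assoc, ← ENNReal.ofReal_mul (by positivity),
        mul_comm]
      congr 2
      rw [div_eq_mul_one_div, Real.mul_rpow (by positivity) (by positivity),
        Real.mul_rpow (by positivity) (by positivity), ← Real.rpow_neg_one x,
        ← Real.rpow_mul hx.le, ← Real.rpow_mul hx.le, ← Real.rpow_mul hx.le,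
        ← Real.rpow_mul (by positivity : 0 ≤ 1 / r),
        mul_comm (x ^ _) ((1 / r) ^ _), mul_assoc, ← Real.rpow_add hx]
      congr 2
      rw [hr]
      field_simp
      ring

lemma hardy_measurable {p : ℝ} (hp : 1 < p) : ∃ C : ℝ, 0 < C ∧ ∀ u : ℝ → ℝ≥0∞, Measurable u →
    ∫⁻ x in Set.Ioi (0 : ℝ), H u x ^ p ≤ ENNReal.ofReal C * ∫⁻ x in Set.Ioi (0 : ℝ), u x ^ p := by
  have hp0 : 0 < p := by linarith
  obtain ⟨r, hr⟩ : ∃ r, r = 1 - 1 / p := ⟨_, rfl⟩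
  have hr0 : 0 < r := by rw [hr, sub_pos, div_lt_one hp0]; exact hp
  refine ⟨(1 / r) ^ (r * p) * (1 / r), by positivity, fun u hu => ?_⟩
  calc ∫⁻ x in Set.Ioi (0 : ℝ), H u x ^ p
      ≤ ∫⁻ x in Set.Ioi (0 : ℝ), ENNReal.ofReal ((1 / r) ^ (r * p)) *
        (ENNReal.ofReal (x ^ (-r - 1)) *
          ∫⁻ y in Set.Ioo 0 x, ENNReal.ofReal (y ^ r) * u y ^ p) :=
        setLIntegral_mono' measurableSet_Ioi (fun x hx => hardy_pointwise hp hr hu hx)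
    _ = ENNReal.ofReal ((1 / r) ^ (r * p)) * ∫⁻ x in Set.Ioi (0 : ℝ),
        ∫⁻ y in Set.Ioi (0 : ℝ), (Set.Ioi y).indicator
          (fun x => ENNReal.ofReal (x ^ (-r - 1)) * (ENNReal.ofReal (y ^ r) * u y ^ p)) x := by
        rw [lintegral_const_mul' _ _ ENNReal.ofReal_ne_top]
        congr 1
        refine setLIntegral_congr_fun measurableSet_Ioi (fun x hx => ?_)
        rw [← lintegral_const_mul' _ _ ENNReal.ofReal_ne_top]
        rw [← lintegral_indicator measurableSet_Ioo, ← lintegral_indicator measurableSet_Ioi]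
        congr 1
        ext y
        simp only [Set.indicator_apply, Set.mem_Ioo, Set.mem_Ioi]
        split_ifs <;> tauto
    _ = ENNReal.ofReal ((1 / r) ^ (r * p)) * ∫⁻ y in Set.Ioi (0 : ℝ),
        ∫⁻ x in Set.Ioi (0 : ℝ), (Set.Ioi y).indicator
          (fun x => ENNReal.ofReal (x ^ (-r - 1)) * (ENNReal.ofReal (y ^ r) * u y ^ p)) x := by
        congr 1
        refine lintegral_lintegral_swap ?_
        refine Measurable.aemeasurable ?_
        have : (Function.uncurry fun x y : ℝ => (Set.Ioi y).indicator
          (fun x => ENNReal.ofReal (x ^ (-r - 1)) * (ENNReal.ofReal (y ^ r) * u y ^ p)) x)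
          = {z : ℝ × ℝ | z.2 < z.1}.indicator (fun z : ℝ × ℝ => ENNReal.ofReal (z.1 ^ (-r - 1)) *
            (ENNReal.ofReal (z.2 ^ r) * u z.2 ^ p)) := by
          ext ⟨x, y⟩
          simp [Set.indicator_apply]
        rw [this]
        refine Measurable.indicator ?_ (measurableSet_lt measurable_snd measurable_fst)
        fun_prop
    _ = ENNReal.ofReal ((1 / r) ^ (r * p)) * ∫⁻ y in Set.Ioi (0 : ℝ),
          ENNReal.ofReal (1 / r) * u y ^ p := by
        congr 1
        refine setLIntegral_congr_fun measurableSet_Ioi (fun y hy => ?_)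
        have hy : 0 < y := hy
        rw [lintegral_indicator measurableSet_Ioi, Measure.restrict_restrict measurableSet_Ioi,
          Set.inter_eq_left.2 (Set.Ioi_subset_Ioi hy.le),
          lintegral_mul_const _ (by fun_prop), lint_Ioi hr0 hy, ← mul_assoc,
          ← ENNReal.ofReal_mul (by positivity)]
        congr 2
        rw [div_mul_eq_mul_div, ← Real.rpow_add hy]
        simp
    _ = _ := by
        rw [lintegral_const_mul' _ _ ENNReal.ofReal_ne_top, ← mul_assoc,
          ← ENNReal.ofReal_mul (by positivity)]

lemma hardy {p : ℝ} (hp : 1 < p) : ∃ C : ℝ, 0 < C ∧ ∀ u : ℝ → ℝ≥0∞,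
    AEMeasurable u (volume.restrict (Set.Ioi 0)) → N p (H u) ≤ ENNReal.ofReal C * N p u := by
  obtain ⟨C, hC, h⟩ := hardy_measurable hp
  have hp0 : 0 < p := by linarith
  refine ⟨C ^ (1 / p), by positivity, fun u hu => ?_⟩
  have hae := hu.ae_eq_mk
  have hH : H u = H (hu.mk u) := by
    ext x
    unfold H
    congr 1
    refine lintegral_congr_ae ?_
    exact ae_restrict_of_ae_restrict_of_subset (fun y hy => hy.1) hae
  have hN : N p u = N p (hu.mk u) := by
    unfold N
    congr 1
    refine lintegral_congr_ae ?_
    filter_upwards [hae] with x hx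
    rw [hx]
  rw [hH, hN]
  unfold N
  rw [← ENNReal.ofReal_rpow_of_pos hC, ← ENNReal.mul_rpow_of_nonneg _ _ (by positivity)]
  exact ENNReal.rpow_le_rpow (h _ hu.measurable_mk) (by positivity)

lemma T_le_H (c : ℕ) (w : ℝ → ℝ) {x : ℝ} (hx : 0 < x) :
    ENNReal.ofReal |T c w x| ≤ H (fun y => ENNReal.ofReal |w y|) x := by
  unfold T H
  rw [abs_div, abs_of_pos (pow_pos hx (c + 1)), pow_succ, ← div_div,
    ENNReal.ofReal_div_of_pos hx]
  refine ENNReal.div_le_div_right ?_ _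
  rw [ENNReal.ofReal_div_of_pos (by positivity)]
  refine ENNReal.div_le_of_le_mul ?_
  rw [intervalIntegral.integral_of_le hx.le, integral_Ioc_eq_integral_Ioo, ← Real.enorm_eq_ofReal_abs,
    ← lintegral_mul_const' _ _ ENNReal.ofReal_ne_top]
  refine (enorm_integral_le_lintegral_enorm _).trans ?_
  refine setLIntegral_mono' measurableSet_Ioo (fun y hy => ?_)
  rw [Real.enorm_eq_ofReal_abs, ← ENNReal.ofReal_mul (abs_nonneg _)]
  refine ENNReal.ofReal_le_ofReal ?_
  rw [abs_mul, abs_of_pos (pow_pos hy.1 c), mul_comm]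
  exact mul_le_mul_of_nonneg_left (pow_le_pow_left₀ hy.1.le hy.2.le c) (abs_nonneg _)

/-- regular data -/
def Jet (n : ℕ) (v : ℕ → ℝ → ℝ) : Prop :=
  (∀ j < n, ∀ x > 0, HasDerivAt (v j) (v (j + 1) x) x) ∧ ∀ j ≤ n, LB (v j)

/-- derivatives of the Taylor quotient -/
noncomputable def gg (v : ℕ → ℝ → ℝ) (j : ℕ) (x : ℝ) : ℝ := T j (v j) x - T (j + 1) (v j) x

/-- last derivative of the Taylor quotient -/
noncomputable def gd (v : ℕ → ℝ → ℝ) (n : ℕ) (x : ℝ) : ℝ :=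
  ((n + 2) * T (n + 1) (v n) x - (n + 1) * T n (v n) x) / x

/-- last but one derivative of the average -/
noncomputable def m1 (v : ℕ → ℝ → ℝ) (n : ℕ) (x : ℝ) : ℝ :=
  (gg v n x - (n + 1) * T n (gg v n) x) / x

/-- last derivative of the average -/
noncomputable def m2 (v : ℕ → ℝ → ℝ) (n : ℕ) (x : ℝ) : ℝ :=
  (gd v n x - (n + 2) * m1 v n x) / x

/-- derivatives of the average -/
noncomputable def mm (n : ℕ) (v : ℕ → ℝ → ℝ) (j : ℕ) : ℝ → ℝ :=
  if j ≤ n then T j (gg v j) else if j = n + 1 then m1 v n else m2 v n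

lemma Jet.gg {n : ℕ} {v : ℕ → ℝ → ℝ} (h : Jet n v) : Jet n (gg v) := by
  refine ⟨fun j hj x hx => ?_, fun j hj => ((h.2 j hj).T j).sub ((h.2 j hj).T (j + 1))⟩
  have h1 := (h.2 j hj.le).hasDerivAt_T j hx
  have h2 := (h.2 j hj.le).hasDerivAt_T (j + 1) hx
  rw [← (h.2 j hj.le).T_ibp (h.2 (j + 1) hj) (h.1 j hj) j hx] at h1
  rw [← (h.2 j hj.le).T_ibp (h.2 (j + 1) hj) (h.1 j hj) (j + 1) hx] at h2
  exact h1.sub h2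

lemma Jet.gd {n : ℕ} {v : ℕ → ℝ → ℝ} (h : Jet n v) {x : ℝ} (hx : 0 < x) :
    HasDerivAt (XIf.gg v n) (gd v n x) x := by
  have h1 := (h.2 n le_rfl).hasDerivAt_T n hx
  have h2 := (h.2 n le_rfl).hasDerivAt_T (n + 1) hx
  refine (h1.sub h2).congr_deriv ?_
  unfold XIf.gd
  push_cast
  ring

lemma Jet.mm {n : ℕ} {v : ℕ → ℝ → ℝ} (h : Jet n v) :
    ∀ j < n + 2, ∀ x > 0, HasDerivAt (mm n v j) (mm n v (j + 1) x) x := by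
  intro j hj x hx
  have hx' : x ≠ 0 := ne_of_gt hx
  have hT := (h.gg.2 n le_rfl).hasDerivAt_T n hx
  rcases lt_trichotomy j n with h1 | h1 | h1
  · have h3 := (h.gg.2 j h1.le).hasDerivAt_T j hx
    rw [← (h.gg.2 j h1.le).T_ibp (h.gg.2 (j + 1) h1) (h.gg.1 j h1) j hx] at h3
    unfold XIf.mm
    rw [if_pos h1.le, if_pos (by omega)]
    exact h3
  · subst h1
    unfold XIf.mm
    rw [if_pos le_rfl, if_neg (by omega), if_pos rfl]
    exact hT
  · obtain rfl : j = n + 1 := by omega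
    unfold XIf.mm
    rw [if_neg (by omega), if_pos rfl, if_neg (by omega), if_neg (by omega)]
    refine (((h.gd hx).sub (hT.const_mul ((n : ℝ) + 1))).div (hasDerivAt_id x) hx').congr_deriv ?_
    unfold m2 m1
    simp only [id]
    field_simp
    simp only [Pi.sub_apply]
    ring

lemma Jet.mm_cont {n : ℕ} {v : ℕ → ℝ → ℝ} (h : Jet n v) :
    ContinuousOn (XIf.mm n v (n + 2)) (Set.Ioi 0) := by
  unfold XIf.mm
  rw [if_neg (by omega), if_neg (by omega)]
  have hx : ∀ x ∈ Set.Ioi (0 : ℝ), x ≠ 0 := fun x hx => ne_of_gt hx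
  have a1 := ((h.2 n le_rfl).T n).1
  have a2 := ((h.2 n le_rfl).T (n + 1)).1
  have a3 := (h.gg.2 n le_rfl).1
  have a4 := ((h.gg.2 n le_rfl).T n).1
  have g1 : ContinuousOn (XIf.gd v n) (Set.Ioi 0) :=
    ((a2.const_mul _).sub (a1.const_mul _)).div continuousOn_id hx
  have g2 : ContinuousOn (m1 v n) (Set.Ioi 0) :=
    (a3.sub (a4.const_mul _)).div continuousOn_id hx
  exact (g1.sub (g2.const_mul _)).div continuousOn_id hx

/-- absolute values -/
noncomputable def uu (v : ℕ → ℝ → ℝ) (i : ℕ) (x : ℝ) : ℝ≥0∞ := ENNReal.ofReal |v i x|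

/-- dominating function -/
noncomputable def DD (n : ℕ) (v : ℕ → ℝ → ℝ) (x : ℝ) : ℝ≥0∞ :=
  ∑ i ∈ Finset.range (n + 1), (H (uu v i) x + H (H (uu v i)) x)

lemma H_le_DD {n i : ℕ} (hi : i ≤ n) (v : ℕ → ℝ → ℝ) (x : ℝ) :
    H (uu v i) x + H (H (uu v i)) x ≤ DD n v x :=
  Finset.single_le_sum (f := fun i => H (uu v i) x + H (H (uu v i)) x)
    (fun _ _ => zero_le) (Finset.mem_range.2 (by omega))

lemma abs_le_toReal {D : ℝ≥0∞} (hD : D ≠ ∞) {a : ℝ} (h : ENNReal.ofReal |a| ≤ D) :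
    |a| ≤ D.toReal := (ENNReal.ofReal_le_iff_le_toReal hD).1 h

lemma T_v_bound {n i c : ℕ} (hi : i ≤ n) (v : ℕ → ℝ → ℝ) {x : ℝ} (hx : 0 < x)
    (hD : DD n v x ≠ ∞) : |T c (v i) x| ≤ (DD n v x).toReal :=
  abs_le_toReal hD ((T_le_H c (v i) hx).trans (le_self_add.trans (H_le_DD hi v x)))

lemma T_g_bound {n i c : ℕ} (hi : i ≤ n) (v : ℕ → ℝ → ℝ) {x : ℝ} (hx : 0 < x)
    (hD : DD n v x ≠ ∞) : |T c (gg v i) x| ≤ 2 * (DD n v x).toReal := by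
  have h1 : ENNReal.ofReal |T c (gg v i) x| ≤ 2 * DD n v x := by
    refine (T_le_H c (gg v i) hx).trans ?_
    refine (H_mono (v := fun y => 2 * H (uu v i) y) (fun y hy => ?_) x).trans ?_
    · unfold gg
      calc ENNReal.ofReal |T i (v i) y - T (i + 1) (v i) y|
          ≤ ENNReal.ofReal (|T i (v i) y| + |T (i + 1) (v i) y|) :=
            ENNReal.ofReal_le_ofReal (abs_sub _ _)
        _ = ENNReal.ofReal |T i (v i) y| + ENNReal.ofReal |T (i + 1) (v i) y| :=
            ENNReal.ofReal_add (abs_nonneg _) (abs_nonneg _)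
        _ ≤ H (uu v i) y + H (uu v i) y := add_le_add (T_le_H _ _ hy) (T_le_H _ _ hy)
        _ = 2 * H (uu v i) y := (two_mul _).symm
    · rw [H_const_mul _ (by simp)]
      gcongr
      exact le_add_self.trans (H_le_DD hi v x)
  have := abs_le_toReal (ENNReal.mul_ne_top (by simp) hD) h1
  simpa using this

lemma mm_bounds (n : ℕ) : ∃ c : ℝ, 0 < c ∧ ∀ (v : ℕ → ℝ → ℝ) (x : ℝ), 0 < x → DD n v x ≠ ∞ →
    (∀ j ≤ n, |mm n v j x| ≤ c * (DD n v x).toReal) ∧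
    x * |mm n v (n + 1) x| ≤ c * (DD n v x).toReal ∧
    x ^ 2 * |mm n v (n + 2) x| ≤ c * (DD n v x).toReal := by
  have hn : (0 : ℝ) ≤ n := Nat.cast_nonneg n
  refine ⟨2 + (2 * n + 4) + ((2 * n + 3) + (n + 2) * (2 * n + 4)), by positivity,
    fun v x hx hD => ?_⟩
  have hd : 0 ≤ (DD n v x).toReal := ENNReal.toReal_nonneg
  have b0 : ∀ j ≤ n, |T j (gg v j) x| ≤ 2 * (DD n v x).toReal := fun j hj => T_g_bound hj v hx hD
  have b1 : ∀ c, |T c (v n) x| ≤ (DD n v x).toReal := fun c => T_v_bound le_rfl v hx hD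
  have e1 : x * m1 v n x = gg v n x - (n + 1) * T n (gg v n) x := by
    unfold m1; field_simp
  have e2 : x * gd v n x = (n + 2) * T (n + 1) (v n) x - (n + 1) * T n (v n) x := by
    unfold gd; field_simp
  have e3 : x ^ 2 * m2 v n x = x * gd v n x - (n + 2) * (x * m1 v n x) := by
    unfold m2; field_simp
  generalize (DD n v x).toReal = d at *
  have c1 : |x * m1 v n x| ≤ (2 * n + 4) * d := by
    rw [e1]
    unfold gg
    have := b0 n le_rfl
    have p1 := b1 n
    have p2 := b1 (n + 1)
    rw [abs_le] at *
    unfold gg at this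
    constructor <;> nlinarith
  have c2 : |x * gd v n x| ≤ (2 * n + 3) * d := by
    rw [e2]
    have p1 := b1 n
    have p2 := b1 (n + 1)
    rw [abs_le] at *
    constructor <;> nlinarith
  have c3 : |x ^ 2 * m2 v n x| ≤ ((2 * n + 3) + (n + 2) * (2 * n + 4)) * d := by
    rw [e3]
    refine (abs_sub _ _).trans ?_
    rw [abs_mul ((n : ℝ) + 2), abs_of_nonneg (by positivity : (0 : ℝ) ≤ n + 2)]
    nlinarith
  have n1 : 0 ≤ (n : ℝ) * d := by positivity
  have n2 : 0 ≤ (n : ℝ) * (n * d) := by positivity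
  refine ⟨fun j hj => ?_, ?_, ?_⟩
  · unfold mm
    rw [if_pos hj]
    refine (b0 j hj).trans ?_
    nlinarith
  · unfold mm
    rw [if_neg (by omega), if_pos rfl]
    rw [abs_mul, abs_of_pos hx] at c1
    refine c1.trans ?_
    nlinarith
  · unfold mm
    rw [if_neg (by omega), if_neg (by omega)]
    rw [abs_mul, abs_of_pos (pow_pos hx 2)] at c3
    refine c3.trans ?_
    nlinarith

lemma core (n : ℕ) : ∃ C : ℝ, 0 < C ∧ ∀ v : ℕ → ℝ → ℝ, Jet n v → ∀ j ≤ n + 2, ∀ x > 0,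
    ENNReal.ofReal |iteratedDerivWithin j (fun x => x ^ 2 / (1 + x ^ 2) * T 0 (gg v 0) x)
      (Set.Ioi 0) x| ≤ ENNReal.ofReal C * DD n v x := by
  obtain ⟨P, B, hB, hP, hP0, q0, q1, q2, q3⟩ := phi_bounds (n + 2)
  obtain ⟨c, hc, hm⟩ := mm_bounds n
  refine ⟨2 ^ (n + 2) * (B * c), by positivity, fun v hv j hj x hx => ?_⟩
  by_cases hD : DD n v x = ∞
  · rw [hD, ENNReal.mul_top (by simp; positivity)]
    exact le_top
  obtain ⟨r0, r1, r2⟩ := hm v x hx hD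
  have hPj := iteratedDerivWithin_jet (n := n + 2) (F := P) (fun j _ x _ => hP j x)
  have hmj := iteratedDerivWithin_jet hv.mm
  have hm0 : mm n v 0 = T 0 (gg v 0) := by simp [mm]
  have hPc : ContDiffOn ℝ (n + 2 : ℕ) (P 0) (Set.Ioi 0) :=
    contDiffOn_jet (fun j _ x _ => hP j x)
      (fun x _ => (hP (n + 2) x).continuousAt.continuousWithinAt)
  have hmc := contDiffOn_jet hv.mm hv.mm_cont
  have hle := norm_iteratedFDerivWithin_mul_le hPc hmc isOpen_Ioi.uniqueDiffOn
    (show x ∈ Set.Ioi 0 from hx) (n := j) (by exact_mod_cast hj)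
  simp only [norm_iteratedFDerivWithin_eq_norm_iteratedDerivWithin, Real.norm_eq_abs] at hle
  rw [hP0, hm0] at hle
  have hd : 0 ≤ (DD n v x).toReal := ENNReal.toReal_nonneg
  rw [← ENNReal.ofReal_toReal hD, ← ENNReal.ofReal_mul (by positivity)]
  refine ENNReal.ofReal_le_ofReal (hle.trans ?_)
  rw [← hP0, ← hm0]
  have hterm : ∀ i l, i + l ≤ n + 2 → |P i x| * |mm n v l x| ≤ B * (c * (DD n v x).toReal) := by
    intro i l hil
    have hcd : 0 ≤ c * (DD n v x).toReal := by positivity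
    by_cases hl : l ≤ n
    · exact mul_le_mul (q0 i (by omega) x) (r0 l hl) (abs_nonneg _) hB.le
    · by_cases hl1 : l = n + 1
      · subst hl1
        have hPx : |P i x| ≤ B * x := by
          obtain rfl | rfl : i = 0 ∨ i = 1 := by omega
          · exact q1 x hx
          · exact q3 x hx
        calc _ ≤ B * x * |mm n v (n + 1) x| := by gcongr
          _ = B * (x * |mm n v (n + 1) x|) := by ring
          _ ≤ _ := by gcongr
      · obtain rfl : l = n + 2 := by omega
        obtain rfl : i = 0 := by omega
        calc _ ≤ B * x ^ 2 * |mm n v (n + 2) x| := by gcongr; exact q2 x hx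
          _ = B * (x ^ 2 * |mm n v (n + 2) x|) := by ring
          _ ≤ _ := by gcongr
  calc _ ≤ ∑ i ∈ Finset.range (j + 1), (j.choose i : ℝ) * (B * (c * (DD n v x).toReal)) := by
        refine Finset.sum_le_sum (fun i hi => ?_)
        have hi' : i ≤ j := by have := Finset.mem_range.1 hi; omega
        rw [hPj i (by omega) x hx, hmj (j - i) (by omega) x hx, mul_assoc]
        exact mul_le_mul_of_nonneg_left (hterm i (j - i) (by omega)) (by positivity)
    _ = 2 ^ j * (B * (c * (DD n v x).toReal)) := by
        rw [← Finset.sum_mul]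
        congr 1
        exact_mod_cast Nat.sum_range_choose j
    _ ≤ 2 ^ (n + 2) * (B * (c * (DD n v x).toReal)) := by
        gcongr
        norm_num
    _ = _ := by ring

lemma N_DD {p : ℝ} (hp : 1 < p) (n : ℕ) : ∃ C : ℝ, 0 < C ∧ ∀ v : ℕ → ℝ → ℝ, Jet n v →
    N p (DD n v) ≤ ENNReal.ofReal C * ∑ i ∈ Finset.range (n + 1), N p (uu v i) := by
  obtain ⟨C, hC, h⟩ := hardy hp
  refine ⟨C + C * C, by positivity, fun v hv => ?_⟩
  refine (N_sum_le hp (fun i => (H_measurable (uu v i)).add (H_measurable (H (uu v i))))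
    (n + 1)).trans ?_
  rw [Finset.mul_sum]
  refine Finset.sum_le_sum (fun i hi => ?_)
  have hi' : i ≤ n := by have := Finset.mem_range.1 hi; omega
  have hm : AEMeasurable (uu v i) (volume.restrict (Set.Ioi 0)) :=
    ((hv.2 i hi').1.aemeasurable measurableSet_Ioi).abs.ennreal_ofReal
  refine (N_add_le hp (H_measurable _) (H_measurable _)).trans ?_
  rw [ENNReal.ofReal_add hC.le (by positivity), add_mul, ENNReal.ofReal_mul hC.le, mul_assoc]
  refine add_le_add (h _ hm) ((h _ (H_measurable _).aemeasurable).trans ?_)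
  gcongr
  exact h _ hm

lemma jet_f {n : ℕ} {f : ℝ → ℝ} (hf : ContDiffOn ℝ (n + 2 : ℕ) f (Set.Ici 0)) :
    (∀ j < n + 2, ∀ x > 0, HasDerivAt (iteratedDerivWithin j f (Set.Ici 0))
      (iteratedDerivWithin (j + 1) f (Set.Ici 0) x) x) ∧
    (∀ j ≤ n + 2, LB (iteratedDerivWithin j f (Set.Ici 0))) ∧
    (∀ j ≤ n + 2, ContinuousOn (iteratedDerivWithin j f (Set.Ici 0)) (Set.Ici 0)) := by
  have hu := uniqueDiffOn_Ici (0 : ℝ)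
  have hc : ∀ j ≤ n + 2, ContinuousOn (iteratedDerivWithin j f (Set.Ici 0)) (Set.Ici 0) :=
    fun j hj => hf.continuousOn_iteratedDerivWithin (by exact_mod_cast hj) hu
  refine ⟨fun j hj x hx => ?_, fun j hj => ⟨(hc j hj).mono Set.Ioi_subset_Ici_self, fun R => ?_⟩,
    hc⟩
  · have hd := hf.differentiableOn_iteratedDerivWithin (m := j) (by exact_mod_cast hj) hu x
      (Set.mem_Ici.2 (le_of_lt hx))
    rw [iteratedDerivWithin_succ]
    exact hd.hasDerivWithinAt.hasDerivAt (Ici_mem_nhds hx)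
  · obtain ⟨M, hM⟩ := (isCompact_Icc (a := (0 : ℝ)) (b := R)).exists_bound_of_continuousOn
      ((hc j hj).mono Set.Icc_subset_Ici_self)
    exact ⟨M, fun x hx => hM x ⟨hx.1.le, hx.2⟩⟩

lemma taylor {n : ℕ} {f : ℝ → ℝ} (hf : ContDiffOn ℝ (n + 2 : ℕ) f (Set.Ici 0)) {x : ℝ}
    (hx : 0 < x) : gg (fun j => iteratedDerivWithin (j + 2) f (Set.Ici 0)) 0 x =
      (f x - f 0 - x * derivWithin f (Set.Ici 0) 0) / x ^ 2 := by
  obtain ⟨h1, h2, h3⟩ := jet_f hf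
  have c0 := (h3 0 (by omega)).mono (show Set.Icc (0 : ℝ) x ⊆ Set.Ici 0 from fun y hy => hy.1)
  have c1 := (h3 1 (by omega)).mono (show Set.Icc (0 : ℝ) x ⊆ Set.Ici 0 from fun y hy => hy.1)
  have d0 := h1 0 (by omega)
  have d1 := h1 1 (by omega)
  have l2 := h2 2 (by omega)
  simp only [zero_add, iteratedDerivWithin_zero, iteratedDerivWithin_one] at c0 c1 d0 d1
  norm_num at d1
  have i0 : ∫ y in (0 : ℝ)..x, y ^ 0 * iteratedDerivWithin 2 f (Set.Ici 0) y
      = derivWithin f (Set.Ici 0) x - derivWithin f (Set.Ici 0) 0 := by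
    refine intervalIntegral.integral_eq_sub_of_hasDerivAt_of_le hx.le c1 (fun y hy => ?_)
      (l2.intervalIntegrable 0 hx)
    simpa using d1 y hy.1
  have i1 : ∫ y in (0 : ℝ)..x, y ^ 1 * iteratedDerivWithin 2 f (Set.Ici 0) y
      = (x * derivWithin f (Set.Ici 0) x - f x) - (0 * derivWithin f (Set.Ici 0) 0 - f 0) := by
    refine intervalIntegral.integral_eq_sub_of_hasDerivAt_of_le
      (f := fun x => x * derivWithin f (Set.Ici 0) x - f x) hx.le
      ((continuousOn_id.mul c1).sub c0) (fun y hy => ?_)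
      (l2.intervalIntegrable 1 hx)
    refine (((hasDerivAt_id y).mul (d1 y hy.1)).sub (d0 y hy.1)).congr_deriv ?_
    simp
  unfold gg T
  simp only [zero_add]
  rw [i0, i1]
  have hx' : x ≠ 0 := hx.ne'
  field_simp
  ring

end XIf

open XIf in
theorem xIf_sobolev_bound (k : ℕ) (p : ℝ) (hp : 1 < p) :
    ∃ C > 0, ∀ f : ℝ → ℝ, ContDiffOn ℝ (max k 2 : ℕ) f (Set.Ici 0) →
      ∑ j ∈ Finset.range (k + 1),
          (∫⁻ x in Set.Ioi (0 : ℝ),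
            ENNReal.ofReal
              (|iteratedDerivWithin j
                  (fun x => x *
                    (∫ y in Set.Ioo (0 : ℝ) x,
                      (f y - f 0 - y * derivWithin f (Set.Ici 0) 0) / y ^ 2) / (1 + x ^ 2))
                  (Set.Ioi 0) x| ^ p)) ^ (1 / p)
        ≤ ENNReal.ofReal C *
          ∑ i ∈ Finset.range (max (k - 1) 1 + 1),
            (∫⁻ x in Set.Ioi (0 : ℝ),
              ENNReal.ofReal (|iteratedDerivWithin (1 + i) f (Set.Ici 0) x| ^ p)) ^ (1 / p) := by
  have hp0 : 0 < p := by linarith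
  obtain ⟨n, hn⟩ : ∃ n, max k 2 = n + 2 := ⟨max k 2 - 2, by omega⟩
  obtain ⟨C, hC, hcore⟩ := core n
  obtain ⟨C', hC', hN⟩ := N_DD hp n
  refine ⟨(k + 1 : ℕ) * (C * C'), by positivity, fun f hf => ?_⟩
  rw [hn] at hf
  rw [show max (k - 1) 1 + 1 = n + 1 + 1 by omega]
  obtain ⟨h1, h2, h3⟩ := jet_f hf
  obtain ⟨v, hvdef⟩ : ∃ v : ℕ → ℝ → ℝ, v = fun j => iteratedDerivWithin (j + 2) f (Set.Ici 0) :=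
    ⟨_, rfl⟩
  have hv : Jet n v := by
    rw [hvdef]
    exact ⟨fun j hj x hx => h1 (j + 2) (by omega) x hx, fun j hj => h2 (j + 2) (by omega)⟩
  have hF : Set.EqOn (fun x => x * (∫ y in Set.Ioo (0 : ℝ) x,
      (f y - f 0 - y * derivWithin f (Set.Ici 0) 0) / y ^ 2) / (1 + x ^ 2))
      (fun x => x ^ 2 / (1 + x ^ 2) * T 0 (gg v 0) x) (Set.Ioi 0) := by
    intro x hx
    have hx : 0 < x := hx
    have : ∫ y in Set.Ioo (0 : ℝ) x, (f y - f 0 - y * derivWithin f (Set.Ici 0) 0) / y ^ 2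
        = ∫ y in (0 : ℝ)..x, y ^ 0 * gg v 0 y := by
      rw [intervalIntegral.integral_of_le hx.le, integral_Ioc_eq_integral_Ioo]
      refine setIntegral_congr_fun measurableSet_Ioo (fun y hy => ?_)
      rw [hvdef, taylor hf hy.1, pow_zero, one_mul]
    simp only [T, this]
    field_simp
    ring
  have hsum : ∑ i ∈ Finset.range (n + 1), N p (uu v i) ≤ ∑ i ∈ Finset.range (n + 1 + 1),
      (∫⁻ x in Set.Ioi (0 : ℝ),
        ENNReal.ofReal (|iteratedDerivWithin (1 + i) f (Set.Ici 0) x| ^ p)) ^ (1 / p) := by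
    rw [Finset.sum_range_succ' _ (n + 1)]
    refine le_self_add.trans' (Finset.sum_le_sum (fun i _ => le_of_eq ?_))
    unfold N uu
    rw [hvdef, show 1 + (i + 1) = i + 2 by omega]
    simp_rw [ENNReal.ofReal_rpow_of_nonneg (abs_nonneg _) hp0.le]
  have hterm : ∀ j ∈ Finset.range (k + 1), (∫⁻ x in Set.Ioi (0 : ℝ),
            ENNReal.ofReal
              (|iteratedDerivWithin j
                  (fun x => x *
                    (∫ y in Set.Ioo (0 : ℝ) x,
                      (f y - f 0 - y * derivWithin f (Set.Ici 0) 0) / y ^ 2) / (1 + x ^ 2))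
                  (Set.Ioi 0) x| ^ p)) ^ (1 / p) ≤ ENNReal.ofReal C * N p (DD n v) := by
    intro j hj
    have hj' : j ≤ n + 2 := by have := Finset.mem_range.1 hj; omega
    rw [← N_const_mul hp _ ENNReal.ofReal_ne_top]
    simp_rw [← ENNReal.ofReal_rpow_of_nonneg (abs_nonneg _) hp0.le]
    refine N_mono hp (u := fun x => ENNReal.ofReal |iteratedDerivWithin j _ (Set.Ioi 0) x|)
      (fun x hx => ?_)
    rw [iteratedDerivWithin_congr hF hx]
    exact hcore v hv j hj' x hx
  refine (Finset.sum_le_sum hterm).trans ?_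
  rw [Finset.sum_const, Finset.card_range, nsmul_eq_mul, ENNReal.ofReal_mul (by positivity),
    ENNReal.ofReal_mul hC.le, ENNReal.ofReal_natCast, mul_assoc, mul_assoc]
  gcongr
  exact (hN v hv).trans (by gcongr)
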